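/- For every positive integer n there exists a bipartite permutation graph with exactly n² vertices that contains every bipartite permutation graph with n vertices as an induced subgraph. -/

import Mathlib

/-- `S` is an independent set in `G`. -/
def IndepSet {V : Type*} (G : SimpleGraph V) (S : Set V) : Prop :=
  ∀ ⦃x⦄, x ∈ S → ∀ ⦃y⦄, y ∈ S → ¬ G.Adj x y

/-- A graph is bipartite if its vertices can be partitioned into at most two
independent sets. -/
def IsBipartiteGraph {V : Type*} (G : SimpleGraph V) : Prop :=
  ∃ A : Set V, IndepSet G A ∧ IndepSet G Aᶜ

/-- The permutation graph of `π`: vertices are positions, and `i`, `j` are adjacent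
iff `i < j` and `π i > π j`. -/
def permGraph {n : ℕ} (π : Equiv.Perm (Fin n)) : SimpleGraph (Fin n) :=
  SimpleGraph.fromRel (fun i j => i < j ∧ π j < π i)

/-- A graph is a permutation graph if it is isomorphic to `G_π` for some permutation `π`. -/
def IsPermutationGraph {V : Type*} (G : SimpleGraph V) : Prop :=
  ∃ (n : ℕ) (π : Equiv.Perm (Fin n)), Nonempty (G ≃g permGraph π)

/-!
Write a permutation as an injective map `f` between linear orders, so that edges are inversions.
The universal graph has the vertices of a grid, `(i, r)` being joined to `(i + 1, s)` when `s < r`.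
To embed the inversion graph of a 321-avoiding `f`, let the column of `x` be the largest number of
switches between records and non-records along an increasing subsequence ending at `x` (started at
a virtual record). Every column to the left of a nonempty one is nonempty, so `n` columns suffice.
The columns `2k - 1, 2k` form an interval of positions and the columns `2k, 2k + 1` an interval of
values, so that rows only have to respect the order of positions inside the former blocks and the
order of values inside the latter. These orders agree on every column, hence can be amalgamated
into a single order of the rows.
-/

section BipartiteGraph

variable {V W : Type*} {G : SimpleGraph V} {H : SimpleGraph W}

lemma IsBipartiteGraph.of_hom (hH : IsBipartiteGraph H) (g : G →g H) : IsBipartiteGraph G := by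
  obtain ⟨A, hA, hA'⟩ := hH
  exact ⟨g ⁻¹' A, fun _ hx _ hy h => hA hx hy (g.map_adj h),
    fun _ hx _ hy h => hA' hx hy (g.map_adj h)⟩

lemma IsBipartiteGraph.not_adj_of_adj_of_adj (hG : IsBipartiteGraph G) {x y z : V}
    (hxy : G.Adj x y) (hyz : G.Adj y z) : ¬ G.Adj x z := by
  obtain ⟨A, hA, hA'⟩ := hG
  intro hxz
  by_cases hx : x ∈ A
  · have hy : y ∉ A := fun hy => hA hx hy hxy
    exact hA' hy (fun hz => hA hx hz hxz) hyz
  · have hy : y ∈ A := not_not.1 fun hy => hA' hx hy hxy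
    exact hA' hx (fun hz => hA hy hz hyz) hxz

lemma IsPermutationGraph.of_iso (hH : IsPermutationGraph H) (g : G ≃g H) :
    IsPermutationGraph G := by
  obtain ⟨n, π, ⟨h⟩⟩ := hH
  exact ⟨n, π, ⟨g.trans h⟩⟩

end BipartiteGraph

section InversionGraph

variable {V α β : Type*} [LinearOrder α] [LinearOrder β]

/-- The inversion graph of two keys: `x` and `y` are adjacent when `p` and `q` order them in
opposite ways. Permutation graphs are the case of the keys position and value, but having two
keys on an unordered vertex set allows other graphs to be recognised as permutation graphs. -/
def inversionGraph (p : V → α) (q : V → β) : SimpleGraph V where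
  Adj x y := (p x < p y ∧ q y < q x) ∨ (p y < p x ∧ q x < q y)
  symm := ⟨fun _ _ h => h.symm⟩
  loopless := ⟨fun _ h => h.elim (fun h => h.1.false) (fun h => h.1.false)⟩

lemma permGraph_eq_inversionGraph {n : ℕ} (π : Equiv.Perm (Fin n)) :
    permGraph π = inversionGraph id π := by
  ext i j
  simp only [permGraph, SimpleGraph.fromRel_adj, inversionGraph, id]
  exact ⟨And.right, fun h => ⟨by rintro rfl; simp at h, h⟩⟩

lemma exists_equiv_fin_lt_iff_lt [Fintype V] {p : V → α} (hp : p.Injective) :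
    ∃ e : V ≃ Fin (Fintype.card V), ∀ x y, e x < e y ↔ p x < p y := by
  let : LinearOrder V := LinearOrder.lift' p hp
  let e := Fintype.orderIsoFinOfCardEq V rfl
  exact ⟨e.symm.toEquiv, fun _ _ => e.symm.lt_iff_lt⟩

lemma isPermutationGraph_inversionGraph [Finite V] {p : V → α} {q : V → β}
    (hp : p.Injective) (hq : q.Injective) : IsPermutationGraph (inversionGraph p q) := by
  have := Fintype.ofFinite V
  obtain ⟨e, he⟩ := exists_equiv_fin_lt_iff_lt hp
  obtain ⟨f, hf⟩ := exists_equiv_fin_lt_iff_lt hq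
  refine ⟨_, e.symm.trans f, ⟨⟨e, ?_⟩⟩⟩
  simp [permGraph_eq_inversionGraph, inversionGraph, he, hf]

end InversionGraph

section StaircaseGraph

/-- The universal graph, with `m` columns and `k` rows: the vertex in column `i` and row `r` is
adjacent to the vertices of column `i + 1` in the rows `s < r`. -/
def staircaseGraph (m k : ℕ) : SimpleGraph (Fin m × Fin k) where
  Adj x y := (y.1.val = x.1.val + 1 ∧ y.2 < x.2) ∨ (x.1.val = y.1.val + 1 ∧ x.2 < y.2)
  symm := ⟨fun _ _ h => h.symm⟩
  loopless := ⟨fun _ h => by omega⟩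

-- Position sorts by the blocks of columns `{2k - 1, 2k}`, value by the blocks `{2k, 2k + 1}`.
lemma staircaseGraph_eq_inversionGraph (m k : ℕ) :
    staircaseGraph m k = inversionGraph
      (fun x => toLex ((x.1.val + 1) / 2, toLex (x.2.val, x.1.val)))
      (fun x => toLex (x.1.val / 2, toLex (x.2.val, x.1.val))) := by
  ext ⟨i, r⟩ ⟨j, s⟩
  simp only [staircaseGraph, inversionGraph, Prod.Lex.toLex_lt_toLex, Fin.lt_def]
  omega

lemma isPermutationGraph_staircaseGraph (m k : ℕ) : IsPermutationGraph (staircaseGraph m k) := by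
  have key_injective (b : ℕ → ℕ) : Function.Injective fun x : Fin m × Fin k =>
      toLex (b x.1.val, toLex (x.2.val, x.1.val)) := by
    intro x y h
    simp only [EmbeddingLike.apply_eq_iff_eq, Prod.mk.injEq] at h
    exact Prod.ext (Fin.ext h.2.2) (Fin.ext h.2.1)
  rw [staircaseGraph_eq_inversionGraph]
  exact isPermutationGraph_inversionGraph (key_injective fun i => (i + 1) / 2)
    (key_injective fun i => i / 2)

lemma isBipartiteGraph_staircaseGraph (m k : ℕ) : IsBipartiteGraph (staircaseGraph m k) := by
  refine ⟨{x | Even x.1.val}, ?_, ?_⟩ <;>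
  · intro x hx y hy h
    simp only [Set.mem_compl_iff, Set.mem_ofPred_eq] at hx hy
    rcases h with h | h <;> grind

end StaircaseGraph

section Ranking

variable {V ι : Type*} [LinearOrder ι] {R : V → V → Prop} {c : V → ι}

-- Elements are inserted in the order of increasing `c`, so that the new one is always a peak.
lemma exists_rat_lt_of_peak_trans_finset (irrefl : ∀ x, ¬ R x x)
    (peak_trans : ∀ x y z, c x ≤ c y → c z ≤ c y → R x y → R y z → R x z) (S : Finset V) :
    ∃ r : V → ℚ, ∀ x ∈ S, ∀ y ∈ S, R x y → r x < r y := by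
  classical
  induction S using Finset.induction_on_max_value c with
  | empty => simp
  | insert a S ha hmax ih =>
    obtain ⟨r, hr⟩ := ih
    obtain ⟨t, ht_lower, ht_upper⟩ := Order.exists_between_finsets
      ({x ∈ S | R x a}.image r) ({z ∈ S | R a z}.image r) (by
        simp only [Finset.forall_mem_image, Finset.mem_filter]
        rintro x ⟨hx, hxa⟩ z ⟨hz, haz⟩
        exact hr x hx z hz (peak_trans x a z (hmax x hx) (hmax z hz) hxa haz))
    simp only [Finset.forall_mem_image, Finset.mem_filter, and_imp] at ht_lower ht_upper
    refine ⟨Function.update r a t, fun x hx y hy hxy => ?_⟩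
    rcases Finset.mem_insert.1 hx with rfl | hxS <;> rcases Finset.mem_insert.1 hy with rfl | hyS
    · exact (irrefl _ hxy).elim
    · simpa [ne_of_mem_of_not_mem hyS ha] using ht_upper hyS hxy
    · simpa [ne_of_mem_of_not_mem hxS ha] using ht_lower hxS hxy
    · simpa [ne_of_mem_of_not_mem hxS ha, ne_of_mem_of_not_mem hyS ha] using hr x hxS y hyS hxy

lemma exists_fin_lt_of_lt [Fintype V] {α : Type*} [LinearOrder α] (r : V → α) :
    ∃ k : V → Fin (Fintype.card V), ∀ x y, r x < r y → k x < k y := by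
  refine ⟨fun x => ⟨Fintype.card {z // r z < r x}, Fintype.card_subtype_lt (lt_irrefl (r x))⟩,
    fun x y hxy => Fin.mk_lt_mk.2 ?_⟩
  simp only [Fintype.card_subtype]
  refine Finset.card_lt_card (Finset.ssubset_iff_of_subset ?_ |>.2 ⟨x, by simpa, by simp⟩)
  exact Finset.monotone_filter_right _ fun z _ hz => hz.trans hxy

lemma exists_fin_lt_of_peak_trans [Fintype V] (irrefl : ∀ x, ¬ R x x)
    (peak_trans : ∀ x y z, c x ≤ c y → c z ≤ c y → R x y → R y z → R x z) :
    ∃ k : V → Fin (Fintype.card V), ∀ x y, R x y → k x < k y := by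
  obtain ⟨r, hr⟩ := exists_rat_lt_of_peak_trans_finset irrefl peak_trans Finset.univ
  obtain ⟨k, hk⟩ := exists_fin_lt_of_lt r
  exact ⟨k, fun x y hxy => hk x y (hr x (Finset.mem_univ x) y (Finset.mem_univ y) hxy)⟩

end Ranking

section Layering

variable {α β : Type*} [LinearOrder α] [LinearOrder β] {f : α → β} {c : α → ℕ}

/-- A layering of `f` assigns columns to the points of `f` as in a staircase: the blocks of columns
`{2k - 1, 2k}` appear in order of position, the blocks `{2k, 2k + 1}` in order of value, and there
is no inversion inside a column. -/
structure IsLayering (f : α → β) (c : α → ℕ) : Prop where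
  positionBlock_le {x y : α} : x < y → (c x + 1) / 2 ≤ (c y + 1) / 2
  valueBlock_le {x y : α} : f x < f y → c x / 2 ≤ c y / 2
  apply_lt {x y : α} : c x = c y → x < y → f x < f y

/-- The order that the rows of a layering have to respect: by value inside the blocks
`{2k, 2k + 1}` of columns, by position inside the blocks `{2k - 1, 2k}`. -/
def RowLT (f : α → β) (c : α → ℕ) (x y : α) : Prop :=
  (c x / 2 = c y / 2 ∧ f x < f y) ∨ ((c x + 1) / 2 = (c y + 1) / 2 ∧ x < y)

lemma not_rowLT_self (x : α) : ¬ RowLT f c x x := by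
  simp [RowLT]

lemma IsLayering.lt_of_apply_lt (hc : IsLayering f c) {x y : α} (hxy : c x = c y)
    (h : f x < f y) : x < y := by
  by_contra! hle
  rcases hle.eq_or_lt with rfl | hlt
  · exact h.false
  · exact h.asymm (hc.apply_lt hxy.symm hlt)

-- When the two comparisons use different blocks, `y` shares its column with `x` or with `z`.
lemma IsLayering.rowLT_peak_trans (hc : IsLayering f c) (x y z : α) (hxy : c x ≤ c y)
    (hzy : c z ≤ c y) (h₁ : RowLT f c x y) (h₂ : RowLT f c y z) : RowLT f c x z := by
  rcases h₁ with ⟨b₁, h₁⟩ | ⟨b₁, h₁⟩ <;> rcases h₂ with ⟨b₂, h₂⟩ | ⟨b₂, h₂⟩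
  · exact .inl ⟨b₁.trans b₂, h₁.trans h₂⟩
  · rcases Nat.even_or_odd' (c y) with ⟨k, hk | hk⟩
    · exact .inr ⟨by omega, (hc.lt_of_apply_lt (by omega) h₁).trans h₂⟩
    · exact .inl ⟨by omega, h₁.trans (hc.apply_lt (by omega) h₂)⟩
  · rcases Nat.even_or_odd' (c y) with ⟨k, hk | hk⟩
    · exact .inr ⟨by omega, h₁.trans (hc.lt_of_apply_lt (by omega) h₂)⟩
    · exact .inl ⟨by omega, (hc.apply_lt (by omega) h₁).trans h₂⟩
  · exact .inr ⟨b₁.trans b₂, h₁.trans h₂⟩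

section Rows

variable {ρ : Type*} [LinearOrder ρ] {r : α → ρ}

lemma IsLayering.adjacent_columns_of_inversion (hc : IsLayering f c)
    (hr : ∀ x y, RowLT f c x y → r x < r y) {x y : α} (hxy : x < y) (hyx : f y < f x) :
    (c y = c x + 1 ∧ r y < r x) ∨ (c x = c y + 1 ∧ r x < r y) := by
  have hpos := hc.positionBlock_le hxy
  have hval := hc.valueBlock_le hyx
  have hne : c x ≠ c y := fun h => hyx.asymm (hc.apply_lt h hxy)
  rcases hne.lt_or_gt with hlt | hlt
  · exact .inl ⟨by omega, hr y x (.inl ⟨by omega, hyx⟩)⟩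
  · exact .inr ⟨by omega, hr x y (.inr ⟨by omega, hxy⟩)⟩

lemma IsLayering.inversionGraph_adj_of_succ_column (hc : IsLayering f c) (hf : f.Injective)
    (hr : ∀ x y, RowLT f c x y → r x < r y) {x y : α} (hxy : c y = c x + 1) (hyx : r y < r x) :
    (inversionGraph id f).Adj x y := by
  have hne : x ≠ y := by rintro rfl; omega
  have hrow : ¬ RowLT f c x y := fun h => hyx.asymm (hr x y h)
  rcases Nat.even_or_odd' (c x) with ⟨k, hk | hk⟩
  · have hpos : x < y := by
      by_contra! hle
      have := hc.positionBlock_le (hle.lt_of_ne' hne)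
      omega
    have hval : ¬ f x < f y := fun h => hrow (.inl ⟨by omega, h⟩)
    exact .inl ⟨hpos, (not_lt.1 hval).lt_of_ne' (hf.ne hne)⟩
  · have hval : f x < f y := by
      by_contra! hle
      have := hc.valueBlock_le (hle.lt_of_ne' (hf.ne hne))
      omega
    have hpos : ¬ x < y := fun h => hrow (.inr ⟨by omega, h⟩)
    exact .inr ⟨(not_lt.1 hpos).lt_of_ne' hne, hval⟩

lemma IsLayering.inversionGraph_adj_iff (hc : IsLayering f c) (hf : f.Injective)
    (hr : ∀ x y, RowLT f c x y → r x < r y) (x y : α) :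
    (inversionGraph id f).Adj x y ↔
      (c y = c x + 1 ∧ r y < r x) ∨ (c x = c y + 1 ∧ r x < r y) := by
  constructor
  · rintro (⟨hxy, hyx⟩ | ⟨hxy, hyx⟩)
    · exact hc.adjacent_columns_of_inversion hr hxy hyx
    · exact (hc.adjacent_columns_of_inversion hr hxy hyx).symm
  · rintro (⟨hxy, hyx⟩ | ⟨hxy, hyx⟩)
    · exact hc.inversionGraph_adj_of_succ_column hf hr hxy hyx
    · exact (hc.inversionGraph_adj_of_succ_column hf hr hxy hyx).symm

lemma eq_of_column_eq_of_row_eq (hr : ∀ x y, RowLT f c x y → r x < r y) {x y : α}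
    (hcol : c x = c y) (hrow : r x = r y) : x = y := by
  by_contra hne
  rcases lt_or_gt_of_ne hne with h | h
  · exact (hr x y (.inr ⟨by rw [hcol], h⟩)).ne hrow
  · exact (hr y x (.inr ⟨by rw [hcol], h⟩)).ne' hrow

end Rows

lemma IsLayering.nonempty_embedding_staircaseGraph [Fintype α] (hc : IsLayering f c)
    (hf : f.Injective) {m : ℕ} (hm : ∀ x, c x < m) :
    Nonempty (inversionGraph id f ↪g staircaseGraph m (Fintype.card α)) := by
  obtain ⟨r, hr⟩ := exists_fin_lt_of_peak_trans not_rowLT_self hc.rowLT_peak_trans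
  refine ⟨⟨⟨fun x => (⟨c x, hm x⟩, r x), fun x y h => ?_⟩, fun {x y} => ?_⟩⟩
  · rw [Prod.mk.injEq, Fin.mk.injEq] at h
    exact eq_of_column_eq_of_row_eq hr h.1 h.2
  · exact (hc.inversionGraph_adj_iff hf hr x y).symm

end Layering

section Level

variable {α β : Type*} [LinearOrder α] [LinearOrder β] {f : α → β} {x y : α}

/-- `f` avoids the pattern 321: it has no decreasing subsequence of length three. -/
def Avoids321 (f : α → β) : Prop :=
  ∀ ⦃x y z⦄, x < y → y < z → f y < f x → ¬ f z < f y

lemma avoids321_of_isBipartiteGraph (h : IsBipartiteGraph (inversionGraph id f)) :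
    Avoids321 f := fun _ _ _ hxy hyz hf hf' =>
  h.not_adj_of_adj_of_adj (.inl ⟨hxy, hf⟩) (.inl ⟨hyz, hf'⟩)
    (.inl ⟨hxy.trans hyz, hf'.trans hf⟩)

/-- `x` is a record (left-to-right maximum) of `f`. For a 321-avoiding injective `f`, records and
non-records are the two colour classes of the inversion graph. -/
def IsRecord (f : α → β) (x : α) : Prop :=
  ∀ y < x, f y ≤ f x

/-- `y` can precede `x` in an increasing subsequence of `f` that alternates between records and
non-records. -/
def AlternatesBelow (f : α → β) (y x : α) : Prop :=
  y < x ∧ f y < f x ∧ (IsRecord f y ↔ ¬ IsRecord f x)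

lemma not_isRecord_of_inversion (hxy : x < y) (hyx : f y < f x) : ¬ IsRecord f y :=
  fun h => (h x hxy).not_gt hyx

lemma Avoids321.isRecord_of_inversion (hf : Avoids321 f) (hxy : x < y) (hyx : f y < f x) :
    IsRecord f x := by
  intro z hzx
  by_contra! hlt
  exact hf hzx hxy hlt hyx

lemma IsRecord.lt_of_apply_lt (hx : IsRecord f x) (h : f x < f y) : x < y := by
  by_contra! hle
  rcases hle.eq_or_lt with rfl | hlt
  · exact h.false
  · exact (hx y hlt).not_gt h

lemma Avoids321.apply_le_of_not_isRecord (hf : Avoids321 f) (hx : ¬ IsRecord f x) (hxy : x < y) :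
    f x ≤ f y := by
  by_contra! hlt
  exact hx (hf.isRecord_of_inversion hxy hlt)

variable [Fintype α]

open Classical in
/-- The largest number of switches between records and non-records along an increasing subsequence
of `f` ending at `x`. Subsequences starting at a non-record count one extra switch, as if preceded
by a record, so that the parity of the level tells records from non-records. -/
noncomputable def level (f : α → β) (x : α) : ℕ :=
  (Finset.univ.sup fun y : {y // AlternatesBelow f y x} => level f y + 1) ⊔
    if IsRecord f x then 0 else 1
termination_by wellFounded_lt.wrap x
decreasing_by exact y.2.1

lemma AlternatesBelow.level_lt (h : AlternatesBelow f y x) : level f y < level f x := by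
  classical
  rw [level.eq_1 f x]
  exact lt_sup_of_lt_left <| Nat.lt_of_succ_le <| Finset.le_sup
    (f := fun z : {z // AlternatesBelow f z x} => level f z + 1) (Finset.mem_univ ⟨y, h⟩)

lemma one_le_level (hx : ¬ IsRecord f x) : 1 ≤ level f x := by
  rw [level, if_neg hx]
  exact le_sup_right

lemma level_cases (f : α → β) (x : α) :
    (IsRecord f x ∧ level f x = 0) ∨ (¬ IsRecord f x ∧ level f x = 1) ∨
      ∃ y, AlternatesBelow f y x ∧ level f x = level f y + 1 := by
  classical
  rw [level]
  rcases isEmpty_or_nonempty {y // AlternatesBelow f y x} with _ | _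
  · by_cases hx : IsRecord f x <;> simp [hx]
  · obtain ⟨⟨y, hy⟩, -, hsup⟩ := Finset.exists_mem_eq_sup Finset.univ Finset.univ_nonempty
      fun y : {y // AlternatesBelow f y x} => level f y + 1
    refine .inr (.inr ⟨y, hy, ?_⟩)
    rw [hsup, sup_eq_left]
    split_ifs <;> omega

lemma even_level_iff (f : α → β) (x : α) : Even (level f x) ↔ IsRecord f x := by
  induction x using WellFoundedLT.induction with
  | ind x ih =>
    rcases level_cases f x with ⟨hx, h⟩ | ⟨hx, h⟩ | ⟨y, hy, h⟩
    · simp [h, hx]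
    · simp [h, hx]
    · rw [h, Nat.even_add_one, ih y hy.1, hy.2.2, not_not]

lemma level_le_level (hxy : x < y) (h : f x < f y) : level f x ≤ level f y := by
  by_cases hclass : IsRecord f x ↔ ¬ IsRecord f y
  · exact (AlternatesBelow.level_lt ⟨hxy, h, hclass⟩).le
  rcases level_cases f x with ⟨-, hx⟩ | ⟨hx, hx'⟩ | ⟨z, hz, hx⟩
  · simp [hx]
  · exact hx' ▸ one_le_level (by tauto)
  · have hzy : AlternatesBelow f z y := ⟨hz.1.trans hxy, hz.2.1.trans h, by have := hz.2.2; tauto⟩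
    exact hx ▸ hzy.level_lt

lemma level_right_le_of_inversion (hxy : x < y) (hyx : f y < f x) :
    level f y ≤ level f x + 1 := by
  rcases level_cases f y with ⟨-, hy⟩ | ⟨-, hy⟩ | ⟨z, hz, hy⟩
  · omega
  · omega
  · have hzx : f z < f x := hz.2.1.trans hyx
    have hz_record : IsRecord f z := hz.2.2.2 (not_isRecord_of_inversion hxy hyx)
    have := level_le_level (hz_record.lt_of_apply_lt hzx) hzx
    omega

lemma Avoids321.level_left_le_of_inversion (hf : Avoids321 f) (hinj : f.Injective)
    (hxy : x < y) (hyx : f y < f x) : level f x ≤ level f y + 1 := by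
  have hx_record := hf.isRecord_of_inversion hxy hyx
  rcases level_cases f x with ⟨-, hx⟩ | ⟨hx, -⟩ | ⟨z, hz, hx⟩
  · omega
  · exact (hx hx_record).elim
  · have hzy : z < y := hz.1.trans hxy
    have hz_record : ¬ IsRecord f z := fun h => hz.2.2.1 h hx_record
    have := level_le_level hzy
      ((hf.apply_le_of_not_isRecord hz_record hzy).lt_of_ne (hinj.ne hzy.ne))
    omega

lemma Avoids321.isLayering_level (hf : Avoids321 f) (hinj : f.Injective) :
    IsLayering f (level f) := by
  have even_of_inversion {x y : α} (hxy : x < y) (hyx : f y < f x) : Even (level f x) :=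
    (even_level_iff f x).2 (hf.isRecord_of_inversion hxy hyx)
  have odd_of_inversion {x y : α} (hxy : x < y) (hyx : f y < f x) : ¬ Even (level f y) :=
    fun h => not_isRecord_of_inversion hxy hyx ((even_level_iff f y).1 h)
  refine ⟨fun {x y} hxy => ?_, fun {x y} hval => ?_, fun {x y} hcol hxy => ?_⟩
  · rcases (hinj.ne hxy.ne).lt_or_gt with hval | hval
    · have := level_le_level hxy hval
      omega
    · have := hf.level_left_le_of_inversion hinj hxy hval
      have := even_of_inversion hxy hval
      grind
  · rcases (ne_of_apply_ne f hval.ne).lt_or_gt with hxy | hxy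
    · have := level_le_level hxy hval
      omega
    · have := level_right_le_of_inversion hxy hval
      have := odd_of_inversion hxy hval
      have := even_of_inversion hxy hval
      grind
  · by_contra! hle
    have hyx := hle.lt_of_ne (hinj.ne hxy.ne')
    exact odd_of_inversion hxy hyx (hcol ▸ even_of_inversion hxy hyx)

lemma exists_level_eq_zero [Nonempty α] (f : α → β) : ∃ x, level f x = 0 := by
  obtain ⟨x, hx⟩ := Finite.exists_min (id : α → α)
  have hx_record : IsRecord f x := fun y hy => ((hx y).not_gt hy).elim
  rcases level_cases f x with ⟨-, h⟩ | ⟨h, -⟩ | ⟨y, hy, -⟩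
  · exact ⟨x, h⟩
  · exact (h hx_record).elim
  · exact ((hx y).not_gt hy.1).elim

lemma exists_level_eq_of_le {m : ℕ} (hm : m ≤ level f x) : ∃ y, level f y = m := by
  induction hm using Nat.decreasingInduction with
  | self => exact ⟨x, rfl⟩
  | of_succ m _ ih =>
    obtain ⟨y, hy⟩ := ih
    rcases level_cases f y with ⟨-, h⟩ | ⟨-, h⟩ | ⟨z, -, h⟩
    · omega
    · obtain rfl : m = 0 := by omega
      have : Nonempty α := ⟨x⟩
      exact exists_level_eq_zero f
    · exact ⟨z, by omega⟩

lemma level_lt_card (f : α → β) (x : α) : level f x < Fintype.card α := by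
  have hsub : Finset.range (level f x + 1) ⊆ Finset.univ.image (level f) := by
    intro m hm
    simpa using exists_level_eq_of_le (Finset.mem_range_succ_iff.1 hm)
  simpa using (Finset.card_le_card hsub).trans Finset.card_image_le

end Level

lemma nonempty_embedding_staircaseGraph {W : Type*} [Fintype W] {H : SimpleGraph W}
    (hperm : IsPermutationGraph H) (hbip : IsBipartiteGraph H) :
    Nonempty (H ↪g staircaseGraph (Fintype.card W) (Fintype.card W)) := by
  obtain ⟨m, π, ⟨g⟩⟩ := hperm
  rw [permGraph_eq_inversionGraph] at g
  have hm : Fintype.card W = m := by simpa using Fintype.card_congr g.toEquiv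
  have hπ : Avoids321 π := avoids321_of_isBipartiteGraph (hbip.of_hom g.symm.toHom)
  have hlevel (i : Fin m) : level π i < m := by simpa using level_lt_card π i
  obtain ⟨h⟩ := (hπ.isLayering_level π.injective).nonempty_embedding_staircaseGraph
    π.injective hlevel
  rw [Fintype.card_fin] at h
  rw [hm]
  exact ⟨g.toEmbedding.trans h⟩

/-- For every positive `n` there is a bipartite permutation graph with exactly `n²`
vertices containing every bipartite permutation graph with `n` vertices as an induced
subgraph. -/
theorem exists_universal_bipartite_permutation_graph (n : ℕ) (hn : 0 < n) :
    ∃ U : SimpleGraph (Fin (n ^ 2)), IsPermutationGraph U ∧ IsBipartiteGraph U ∧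
      ∀ (W : Type) [Fintype W] (H : SimpleGraph W), Fintype.card W = n →
        IsPermutationGraph H → IsBipartiteGraph H → Nonempty (H ↪g U) := by
  let e : Fin (n ^ 2) ≃ Fin n × Fin n := (finCongr (sq n)).trans finProdFinEquiv.symm
  let i : (staircaseGraph n n).comap e ≃g staircaseGraph n n := SimpleGraph.Iso.comap e _
  refine ⟨_, (isPermutationGraph_staircaseGraph n n).of_iso i,
    (isBipartiteGraph_staircaseGraph n n).of_hom i.toHom, ?_⟩
  rintro W _ H rfl hperm hbip
  obtain ⟨g⟩ := nonempty_embedding_staircaseGraph hperm hbip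
  exact ⟨g.trans i.symm.toEmbedding⟩
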